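/- arXiv:1507.01627 — 2 statements merged into one kernel-verified Lean document; each statement's English description precedes it below -/
import Mathlib

section
/- Let (X_n, p_{n+1}) be a tower of fibrations of pointed spaces with a chosen basepoint of lim_n X_n, let k ≥ 0, and let α, ᾱ : I^k → lim_n X_n be maps sending ∂I^k to the basepoint whose classes lie in the kernel of P : π_k(lim_n X_n) → lim_n π_k X_n. If α and ᾱ are homotopic relative to ∂I^k (so [α] = [ᾱ] in π_k(lim_n X_n)), then φ(α) = φ(ᾱ) in lim¹_n π_{k+1}X_n; hence φ induces a well-defined function φ̃ : Ker P → lim¹_n π_{k+1}X_n. -/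
open scoped unitInterval Topology Topology.Homotopy

noncomputable section

/-- A map is a *Serre fibration* if it has the homotopy lifting property
with respect to all cubes `I^k`. -/
def IsSerreFibration {E B : Type} [TopologicalSpace E] [TopologicalSpace B]
    (p : C(E, B)) : Prop :=
  ∀ (k : ℕ) (f : C((Fin k → I), E)) (H : C(I × (Fin k → I), B)),
    (∀ q, H (0, q) = p (f q)) →
      ∃ G : C(I × (Fin k → I), E),
        (∀ q, G (0, q) = f q) ∧ ∀ z, p (G z) = H z

/-- The inverse limit of a tower of spaces. -/
def TowerLim (X : ℕ → Type) [∀ n, TopologicalSpace (X n)]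
    (p : ∀ n, C(X (n + 1), X n)) : Type :=
  { z : ∀ n, X n // ∀ n, p n (z (n + 1)) = z n }

instance {X : ℕ → Type} [∀ n, TopologicalSpace (X n)] (p : ∀ n, C(X (n + 1), X n)) :
    TopologicalSpace (TowerLim X p) :=
  instTopologicalSpaceSubtype

/-- The projection from the inverse limit of a tower to the `n`th space. -/
def TowerLim.proj {X : ℕ → Type} [∀ n, TopologicalSpace (X n)]
    {p : ∀ n, C(X (n + 1), X n)} (n : ℕ) : C(TowerLim X p, X n) :=
  ⟨fun z => z.1 n, (continuous_apply n).comp continuous_subtype_val⟩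

/-- The map induced on homotopy groups (in particular on `π_k` for `N = Fin k`)
by a continuous map `f` with `f x = y`. -/
def piMap {X Y : Type} [TopologicalSpace X] [TopologicalSpace Y] (N : Type)
    (f : C(X, Y)) {x : X} {y : Y} (hf : f x = y) :
    HomotopyGroup N X x → HomotopyGroup N Y y :=
  Quotient.map
    (fun g => (⟨f.comp g.1, fun q hq => by
        rw [ContinuousMap.comp_apply, g.2 q hq, hf]⟩ : GenLoop N Y y))
    (fun g h H => H.map fun F => F.compContinuousMap f)


/-- The map `π_k (lim_n X_n) → π_k (X n)` induced by the projection `TowerLim.proj n`,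
for the basepoint `⟨x, hx⟩` of the inverse limit. -/
def piProjMap {X : ℕ → Type} [∀ n, TopologicalSpace (X n)] {p : ∀ n, C(X (n + 1), X n)}
    (k : ℕ) {x : ∀ n, X n} (hx : ∀ n, p n (x (n + 1)) = x n) (n : ℕ) :
    HomotopyGroup (Fin k) (TowerLim X p) (⟨x, hx⟩ : TowerLim X p) →
      HomotopyGroup (Fin k) (X n) (x n) :=
  piMap (Fin k) (TowerLim.proj n) rfl

/-- The map `π_k (X (n+1)) → π_k (X n)` induced by the map `p n` of the tower. -/
def piTowerMap {X : ℕ → Type} [∀ n, TopologicalSpace (X n)] {p : ∀ n, C(X (n + 1), X n)}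
    (k : ℕ) {x : ∀ n, X n} (hx : ∀ n, p n (x (n + 1)) = x n) (n : ℕ) :
    HomotopyGroup (Fin k) (X (n + 1)) (x (n + 1)) → HomotopyGroup (Fin k) (X n) (x n) :=
  piMap (Fin k) (p n) (hx n)

/-- The distinguished basepoint of `HomotopyGroup N X x`: the class of the constant map. -/
def piConst {X : Type} [TopologicalSpace X] (N : Type) (x : X) : HomotopyGroup N X x :=
  ⟦GenLoop.const⟧

/-- The class in `HomotopyGroup N X x` of a generalized loop. -/
def piCls {N X : Type} [TopologicalSpace X] {x : X} (g : GenLoop N X x) :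
    HomotopyGroup N X x :=
  ⟦g⟧

/-- The generalized loop obtained by composing a generalized loop with a continuous map
`f` satisfying `f x = y`. -/
def genLoopMap {X Y : Type} [TopologicalSpace X] [TopologicalSpace Y] (N : Type)
    (f : C(X, Y)) {x : X} {y : Y} (hf : f x = y) (g : GenLoop N X x) : GenLoop N Y y :=
  ⟨f.comp g.1, fun q hq => by rw [ContinuousMap.comp_apply, g.2 q hq, hf]⟩

/-- `β : I^{k+1} → X` is a *nullhomotopy* of the generalized loop `α : I^k → X`
(writing points of `I^{k+1}` as `(p, t)` with `t` the last coordinate):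
`β (p, 0) = x` for all `p`, `β (p, 1) = α p` for all `p`, and `β (p, t) = x`
for all `p ∈ ∂I^k`. -/
def IsNullhomotopy {k : ℕ} {X : Type} [TopologicalSpace X] {x : X}
    (α : GenLoop (Fin k) X x) (β : C((Fin (k + 1) → I), X)) : Prop :=
  (∀ q : Fin (k + 1) → I, q (Fin.last k) = 0 → β q = x) ∧
  (∀ q : Fin (k + 1) → I, q (Fin.last k) = 1 → β q = α fun i => q i.castSucc) ∧
  (∀ q : Fin (k + 1) → I, (∃ i : Fin k, q i.castSucc = 0 ∨ q i.castSucc = 1) → β q = x)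

/-- `c = β * (f ∘ β'⁻¹)` : the concatenation, in the last coordinate of the cube `I^{k+1}`,
of `β` with the reverse (in the last coordinate) of `f ∘ β'`. -/
def IsGluedWithReverse {k : ℕ} {X Y : Type} [TopologicalSpace X] [TopologicalSpace Y]
    (β : C((Fin (k + 1) → I), X)) (f : C(Y, X)) (β' : C((Fin (k + 1) → I), Y))
    (c : (Fin (k + 1) → I) → X) : Prop :=
  ∀ q : Fin (k + 1) → I, c q =
    if (q (Fin.last k) : ℝ) ≤ 1 / 2 then
      β (Function.update q (Fin.last k)
        (Set.projIcc 0 1 zero_le_one (2 * (q (Fin.last k) : ℝ))))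
    else
      f (β' (Function.update q (Fin.last k)
        (Set.projIcc 0 1 zero_le_one (2 - 2 * (q (Fin.last k) : ℝ)))))

open GenLoop in
/-- Restrict a `k`-dimensional loop to the reindexed face of the `(k+1)`-cube. -/
def faceLoop {k : ℕ} {X : Type} [TopologicalSpace X] {x : X} (α : GenLoop (Fin k) X x) :
    GenLoop {j : Fin (k + 1) // j ≠ Fin.last k} X x :=
  ⟨⟨fun s => α fun i => s ⟨i.castSucc, (Fin.castSucc_lt_last i).ne⟩,
    α.1.continuous.comp (by fun_prop)⟩, by
    rintro y ⟨⟨j, hj⟩, h⟩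
    refine α.2 _ ⟨j.castPred hj, ?_⟩
    simpa using h⟩

theorem insertAt_last {k : ℕ} (t : I) (s : {j : Fin (k + 1) // j ≠ Fin.last k} → I) :
    Cube.insertAt (Fin.last k) (t, s) (Fin.last k) = t := by
  simp [Cube.insertAt, Homeomorph.funSplitAt_symm_apply]

theorem insertAt_castSucc {k : ℕ} (t : I) (s : {j : Fin (k + 1) // j ≠ Fin.last k} → I)
    (i : Fin k) :
    Cube.insertAt (Fin.last k) (t, s) i.castSucc = s ⟨i.castSucc, (Fin.castSucc_lt_last i).ne⟩ := by
  simp [Cube.insertAt, Homeomorph.funSplitAt_symm_apply, (Fin.castSucc_lt_last i).ne]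

theorem update_insertAt {k : ℕ} (t u : I) (s : {j : Fin (k + 1) // j ≠ Fin.last k} → I) :
    Function.update (Cube.insertAt (Fin.last k) (t, s)) (Fin.last k) u
      = Cube.insertAt (Fin.last k) (u, s) := by
  funext j
  by_cases h : j = Fin.last k
  · subst h; rw [insertAt_last]; simp
  · rw [Function.update_of_ne h]
    simp [Cube.insertAt, Homeomorph.funSplitAt_symm_apply, h]

/-- A nullhomotopy, as a path of loops. -/
def nullPath {k : ℕ} {X : Type} [TopologicalSpace X] {x : X} {α : GenLoop (Fin k) X x}
    {β : C((Fin (k + 1) → I), X)} (hβ : IsNullhomotopy α β) :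
    Path (GenLoop.const : GenLoop {j : Fin (k + 1) // j ≠ Fin.last k} X x) (faceLoop α) where
  toFun t := ⟨(β.comp (Cube.insertAt (Fin.last k) :
      C(I × ({j : Fin (k + 1) // j ≠ Fin.last k} → I), Fin (k + 1) → I))).curry t, by
    rintro y ⟨⟨j, hj⟩, h⟩
    refine hβ.2.2 _ ⟨j.castPred hj, ?_⟩
    erw [insertAt_castSucc]
    simpa using h⟩
  continuous_toFun := Continuous.subtype_mk (ContinuousMap.continuous _) _
  source' := by
    ext s
    exact hβ.1 _ (insertAt_last _ _)
  target' := by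
    ext s
    refine (hβ.2.1 _ (insertAt_last _ _)).trans ?_
    change α _ = α _
    congr 1
    funext i
    exact insertAt_castSucc _ _ _

theorem nullPath_apply {k : ℕ} {X : Type} [TopologicalSpace X] {x : X} {α : GenLoop (Fin k) X x}
    {β : C((Fin (k + 1) → I), X)} (hβ : IsNullhomotopy α β) (t : I)
    (s : {j : Fin (k + 1) // j ≠ Fin.last k} → I) :
    nullPath hβ t s = β (Cube.insertAt (Fin.last k) (t, s)) := rfl

/-- A homotopy rel boundary, as a path of loops. -/
def homPath {k : ℕ} {X : Type} [TopologicalSpace X] {x : X} {α α' : GenLoop (Fin k) X x}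
    (H : α.1.HomotopyRel α'.1 (Cube.boundary (Fin k))) :
    Path (faceLoop α) (faceLoop α') where
  toFun t := ⟨(H.toContinuousMap.comp (⟨fun z => (z.1, fun i : Fin k =>
      z.2 ⟨i.castSucc, (Fin.castSucc_lt_last i).ne⟩), by fun_prop⟩ :
      C(I × ({j : Fin (k + 1) // j ≠ Fin.last k} → I), I × (Fin k → I)))).curry t, by
    rintro y ⟨⟨j, hj⟩, h⟩
    have hb : (fun i : Fin k => y ⟨i.castSucc, (Fin.castSucc_lt_last i).ne⟩)
        ∈ Cube.boundary (Fin k) := ⟨j.castPred hj, by simpa using h⟩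
    exact (H.eq_fst t hb).trans (α.2 _ hb)⟩
  continuous_toFun := Continuous.subtype_mk (ContinuousMap.continuous _) _
  source' := by
    ext s
    exact H.apply_zero _
  target' := by
    ext s
    exact H.apply_one _

theorem homPath_apply {k : ℕ} {X : Type} [TopologicalSpace X] {x : X} {α α' : GenLoop (Fin k) X x}
    (H : α.1.HomotopyRel α'.1 (Cube.boundary (Fin k))) (t : I)
    (s : {j : Fin (k + 1) // j ≠ Fin.last k} → I) :
    homPath H t s = H (t, fun i : Fin k => s ⟨i.castSucc, (Fin.castSucc_lt_last i).ne⟩) := rfl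

/-- The loop `B' · h⁻¹ · B⁻¹`. -/
def connLoop {Y : Type} [TopologicalSpace Y] {o a a' : Y} (B : Path o a) (B' : Path o a')
    (h : Path a a') : Path o o := B'.trans (h.symm.trans B.symm)

theorem conn_homotopic {Y : Type} [TopologicalSpace Y] {o a a' : Y} (B B1 : Path o a)
    (B' B1' : Path o a') (h : Path a a') :
    (B'.trans B1'.symm).Homotopic
      ((connLoop B B' h).trans ((B.trans B1.symm).trans (connLoop B1 B1' h).symm)) := by
  rw [← Path.Homotopic.Quotient.eq]
  simp only [connLoop, Path.Homotopic.Quotient.mk_trans, Path.Homotopic.Quotient.mk_symm,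
    Path.trans_symm, Path.symm_symm]
  have k1 : ∀ {u v w : Y} (γ : Path.Homotopic.Quotient u v) (δ : Path.Homotopic.Quotient v w),
      γ.symm.trans (γ.trans δ) = δ := fun γ δ => by
    rw [← Path.Homotopic.Quotient.trans_assoc, Path.Homotopic.Quotient.symm_trans,
      Path.Homotopic.Quotient.refl_trans]
  simp only [Path.Homotopic.Quotient.trans_assoc, k1]

theorem toLoop_glued {k : ℕ} {X Y : Type} [TopologicalSpace X] [TopologicalSpace Y] {x : X}
    {α : GenLoop (Fin k) X x} {β : C((Fin (k + 1) → I), X)} {f : C(Y, X)}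
    {β1 : C((Fin (k + 1) → I), Y)} (hβ : IsNullhomotopy α β)
    (hβ1 : IsNullhomotopy α (f.comp β1)) (c : GenLoop (Fin (k + 1)) X x)
    (hc : IsGluedWithReverse β f β1 c) :
    GenLoop.toLoop (Fin.last k) c = (nullPath hβ).trans (nullPath hβ1).symm := by
  ext t s
  rw [GenLoop.toLoop_apply, hc, insertAt_last, update_insertAt, update_insertAt, Path.trans_apply]
  split_ifs with h
  · rw [nullPath_apply]
    congr 3
    exact Set.projIcc_of_mem _ _
  · change f (β1 _) = f (β1 _)
    refine congrArg (fun u => f (β1 (Cube.insertAt (Fin.last k) (u, s)))) ?_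
    rw [Set.projIcc_of_mem (x := 2 - 2 * (t : ℝ)) zero_le_one
      ⟨by linarith [t.2.2], by linarith⟩]
    ext
    simp
    ring

theorem genLoopMap_fromLoop {k : ℕ} {X Y : Type} [TopologicalSpace X] [TopologicalSpace Y]
    {x : X} {y : Y} (f : C(X, Y)) (hf : f x = y)
    (γ : Path (GenLoop.const : GenLoop {j : Fin (k + 1) // j ≠ Fin.last k} X x) GenLoop.const)
    (δ : Path (GenLoop.const : GenLoop {j : Fin (k + 1) // j ≠ Fin.last k} Y y) GenLoop.const)
    (h : ∀ t s, f (γ t s) = δ t s) :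
    genLoopMap (Fin (k + 1)) f hf (GenLoop.fromLoop (Fin.last k) γ)
      = GenLoop.fromLoop (Fin.last k) δ := by
  ext t
  exact h _ _

theorem toLoop_transAt {k : ℕ} {X : Type} [TopologicalSpace X] {x : X}
    (c d : GenLoop (Fin (k + 1)) X x) (i : Fin (k + 1)) :
    GenLoop.toLoop i (GenLoop.transAt i c d)
      = (GenLoop.toLoop i c).trans (GenLoop.toLoop i d) := by
  rw [← GenLoop.fromLoop_trans_toLoop, GenLoop.to_from]

theorem toLoop_symmAt {k : ℕ} {X : Type} [TopologicalSpace X] {x : X}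
    (c : GenLoop (Fin (k + 1)) X x) (i : Fin (k + 1)) :
    GenLoop.toLoop i (GenLoop.symmAt i c) = (GenLoop.toLoop i c).symm := by
  rw [← GenLoop.fromLoop_symm_toLoop, GenLoop.to_from]

theorem final_step {k : ℕ} {X : Type} [TopologicalSpace X] {x : X}
    (c' c g pg : GenLoop (Fin (k + 1)) X x)
    (h : (GenLoop.toLoop (Fin.last k) c').Homotopic ((GenLoop.toLoop (Fin.last k) g).trans
      ((GenLoop.toLoop (Fin.last k) c).trans (GenLoop.toLoop (Fin.last k) pg).symm))) :
    piCls c' = (piCls pg)⁻¹ * piCls c * piCls g := by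
  have e1 : ∀ a b : GenLoop (Fin (k + 1)) X x,
      piCls a * piCls b = piCls (GenLoop.transAt (Fin.last k) b a) := fun a b =>
    HomotopyGroup.mul_spec (i := Fin.last k) (p := a) (q := b)
  have e2 : ∀ a : GenLoop (Fin (k + 1)) X x,
      (piCls a)⁻¹ = piCls (GenLoop.symmAt (Fin.last k) a) := fun a =>
    HomotopyGroup.inv_spec (i := Fin.last k) (p := a)
  rw [e2, e1, e1]
  refine Quotient.sound (GenLoop.homotopicFrom (Fin.last k) ?_)
  rw [toLoop_transAt, toLoop_transAt, toLoop_symmAt]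
  exact h

theorem final_step' {k : ℕ} {X : Type} [TopologicalSpace X] {x : X}
    (c c' : GenLoop (Fin (k + 1)) X x)
    {a a' : GenLoop {j : Fin (k + 1) // j ≠ Fin.last k} X x}
    (B B1 : Path GenLoop.const a) (B' B1' : Path GenLoop.const a') (h : Path a a')
    (hc : GenLoop.toLoop (Fin.last k) c = B.trans B1.symm)
    (hc' : GenLoop.toLoop (Fin.last k) c' = B'.trans B1'.symm) :
    piCls c' = (piCls (GenLoop.fromLoop (Fin.last k) (connLoop B1 B1' h)))⁻¹ * piCls c
      * piCls (GenLoop.fromLoop (Fin.last k) (connLoop B B' h)) := by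
  refine final_step _ _ _ _ ?_
  rw [hc, hc', GenLoop.to_from, GenLoop.to_from]
  exact conn_homotopic _ _ _ _ _

theorem IsNullhomotopy.comp {k : ℕ} {X Y : Type} [TopologicalSpace X] [TopologicalSpace Y]
    {x : X} {y : Y} {α : GenLoop (Fin k) X x} {α' : GenLoop (Fin k) Y y}
    {β : C((Fin (k + 1) → I), X)} (hβ : IsNullhomotopy α β) (f : C(X, Y)) (hf : f x = y)
    (h : ∀ s, f (α s) = α' s) : IsNullhomotopy α' (f.comp β) := by
  refine ⟨fun q hq => ?_, fun q hq => ?_, fun q hq => ?_⟩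
  · rw [ContinuousMap.comp_apply, hβ.1 q hq, hf]
  · rw [ContinuousMap.comp_apply, hβ.2.1 q hq, h]
  · rw [ContinuousMap.comp_apply, hβ.2.2 q hq, hf]

theorem connLoop_map {X Y : Type} [TopologicalSpace X] [TopologicalSpace Y]
    (f : X → Y) {M : Type} {x : X} {y : Y}
    {o a a' : GenLoop M X x} {o1 a1 a1' : GenLoop M Y y} (B : Path o a) (B' : Path o a')
    (h : Path a a') (B1 : Path o1 a1) (B1' : Path o1 a1') (h1 : Path a1 a1')
    (hB : ∀ t s, f (B t s) = B1 t s) (hB' : ∀ t s, f (B' t s) = B1' t s)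
    (hh : ∀ t s, f (h t s) = h1 t s) (t : I) (s : M → I) :
    f (connLoop B B' h t s) = connLoop B1 B1' h1 t s := by
  simp only [connLoop, Path.trans_apply]
  split_ifs
  · exact hB' _ _
  · exact hh _ _
  · exact hB _ _

/-- **Proposition 4.4 (`φ` descends to homotopy classes).**  Let `(X n, p n)` be a tower of
fibrations of pointed topological spaces, with basepoints the components `x n` of a chosen
point of the inverse limit, let `k ≥ 0`, and let `α, ᾱ : I^k → lim_n X_n` be maps sending
`∂I^k` to the basepoint whose classes lie in the kernel of
`P : π_k (lim_n X_n) → lim_n π_k X_n`.  If `α` and `ᾱ` are homotopic relative to `∂I^k`,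
then `φ(α) = φ(ᾱ)` in `lim¹_n π_{k+1} X_n`: for any choices of families of nullhomotopies
`β` of the `α_n = P_n ∘ α` and `β̄` of the `ᾱ_n = P_n ∘ ᾱ`, the families
`([β_n * (p_{n+1} ∘ β_{n+1}⁻¹)])_n` and `([β̄_n * (p_{n+1} ∘ β̄_{n+1}⁻¹)])_n` lie in the same
orbit of the `lim¹` action; hence `φ` induces a well-defined function
`φ̃ : Ker P → lim¹_n π_{k+1} X_n`.  (The orbit relation `h' = g · h · ((p_{n+1})_* g)⁻¹`,
written with homotopy classes composed in the order of concatenation of cubes, reads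
`(πp (g (n+1)))⁻¹ * h n * g n` in Mathlib's multiplication, which composes in the opposite
order.) -/
theorem phi_eq_of_homotopic
    (X : ℕ → Type) [∀ n, TopologicalSpace (X n)] (p : ∀ n, C(X (n + 1), X n))
    (hfib : ∀ n, IsSerreFibration (p n))
    (x : ∀ n, X n) (hx : ∀ n, p n (x (n + 1)) = x n)
    (k : ℕ)
    (α α' : GenLoop (Fin k) (TowerLim X p) (⟨x, hx⟩ : TowerLim X p))
    (hker : ∀ n, piProjMap k hx n (piCls α) = piConst (Fin k) (x n))
    (hker' : ∀ n, piProjMap k hx n (piCls α') = piConst (Fin k) (x n))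
    (hhom : GenLoop.Homotopic α α')
    (β β' : ∀ n, C((Fin (k + 1) → I), X n))
    (hβ : ∀ n, IsNullhomotopy (genLoopMap (Fin k) (TowerLim.proj n) rfl α) (β n))
    (hβ' : ∀ n, IsNullhomotopy (genLoopMap (Fin k) (TowerLim.proj n) rfl α') (β' n))
    (c c' : ∀ n, GenLoop (Fin (k + 1)) (X n) (x n))
    (hc : ∀ n, IsGluedWithReverse (β n) (p n) (β (n + 1)) (c n))
    (hc' : ∀ n, IsGluedWithReverse (β' n) (p n) (β' (n + 1)) (c' n)) :
    ∃ g : ∀ n, HomotopyGroup (Fin (k + 1)) (X n) (x n),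
      ∀ n, piCls (c' n)
        = (piTowerMap (k + 1) hx n (g (n + 1)))⁻¹ * piCls (c n) * g n := by
  obtain ⟨H⟩ := hhom
  let Hn : ∀ n, (genLoopMap (Fin k) (TowerLim.proj n) rfl α :
      GenLoop (Fin k) (X n) (x n)).1.HomotopyRel
      (genLoopMap (Fin k) (TowerLim.proj n) rfl α' : GenLoop (Fin k) (X n) (x n)).1
      (Cube.boundary (Fin k)) := fun n => H.compContinuousMap (TowerLim.proj n)
  let γ : ∀ n, Path (GenLoop.const : GenLoop {j : Fin (k + 1) // j ≠ Fin.last k} (X n) (x n))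
      GenLoop.const :=
    fun n => connLoop (nullPath (hβ n)) (nullPath (hβ' n)) (homPath (Hn n))
  refine ⟨fun n => piCls (GenLoop.fromLoop (Fin.last k) (γ n)), fun n => ?_⟩
  have hβ1 := (hβ (n + 1)).comp (p n) (hx n)
    (α' := genLoopMap (Fin k) (TowerLim.proj n) rfl α) (fun s => (α.1 s).2 n)
  have hβ1' := (hβ' (n + 1)).comp (p n) (hx n)
    (α' := genLoopMap (Fin k) (TowerLim.proj n) rfl α') (fun s => (α'.1 s).2 n)
  have key : piTowerMap (k + 1) hx n (piCls (GenLoop.fromLoop (Fin.last k) (γ (n + 1))))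
      = piCls (GenLoop.fromLoop (Fin.last k)
        (connLoop (nullPath hβ1) (nullPath hβ1') (homPath (Hn n)))) := by
    refine congrArg piCls (genLoopMap_fromLoop (p n) (hx n) (γ (n + 1)) _ ?_)
    intro t s
    refine connLoop_map (p n) _ _ _ _ _ _ (fun _ _ => rfl) (fun _ _ => rfl) ?_ t s
    intro t s
    exact (H (t, fun i : Fin k => s ⟨i.castSucc, (Fin.castSucc_lt_last i).ne⟩)).2 n
  rw [key]
  exact final_step' _ _ _ _ _ _ _ (toLoop_glued (hβ n) hβ1 _ (hc n))
    (toLoop_glued (hβ' n) hβ1' _ (hc' n))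

end
end

section
/- Let (X_n, p_{n+1}) be a tower of fibrations of pointed spaces with a chosen basepoint of lim_n X_n, and let k ≥ 0. Then the function φ̃ : Ker P → lim¹_n π_{k+1}X_n is surjective: for every family of maps γ_n : I^{k+1} → X_n (n ≥ 0) sending ∂I^{k+1} to the basepoint, there exists a map α : I^k → lim_n X_n sending ∂I^k to the basepoint, with [α] in the kernel of P : π_k(lim_n X_n) → lim_n π_k X_n, such that φ̃([α]) equals the orbit of ([γ_n])_{n≥0} in lim¹_n π_{k+1}X_n. -/
open scoped unitInterval Topology Topology.Homotopy

noncomputable section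

/-- The part `J = I^k × 0 ∪ ∂I^k × I` of the boundary of the cube. -/
def InJ {k : ℕ} (q : Fin (k + 1) → I) : Prop :=
  q (Fin.last k) = 0 ∨ ∃ i : Fin k, q i.castSucc = 0 ∨ q i.castSucc = 1

/-- Auxiliary function measuring the distance from the faces of `J`. -/
def faceDist {k : ℕ} (q : Fin (k + 1) → I) (j : Fin (k + 1)) : ℝ :=
  if j = Fin.last k then (q j : ℝ) else min (q j : ℝ) (1 - q j)

/-- Distance from `J`. -/
def distJ {k : ℕ} (q : Fin (k + 1) → I) : ℝ :=
  Finset.univ.inf' Finset.univ_nonempty (faceDist q)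

/-- The flow of the cube towards `J`. -/
def flowJ {k : ℕ} (z : I × (Fin (k + 1) → I)) (j : Fin (k + 1)) : I :=
  Set.projIcc 0 1 zero_le_one
    (if j = Fin.last k then (z.2 j : ℝ) - 4 * (distJ z.2 - z.1)
      else 1 / 2 + ((z.2 j : ℝ) - 1 / 2) * (1 + 4 * (distJ z.2 - z.1)))

lemma continuous_distJ {k : ℕ} : Continuous (distJ (k := k)) := by
  unfold distJ
  refine Continuous.finset_inf'_apply _ fun j _ => ?_
  unfold faceDist
  split_ifs <;> fun_prop

lemma continuous_flowJ {k : ℕ} : Continuous (flowJ (k := k)) := by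
  have := continuous_distJ (k := k)
  refine continuous_pi fun j => ?_
  unfold flowJ
  refine continuous_projIcc.comp ?_
  split_ifs <;> fun_prop

lemma distJ_nonneg {k : ℕ} (q : Fin (k + 1) → I) : 0 ≤ distJ q := by
  unfold distJ
  refine Finset.le_inf' _ _ fun j _ => ?_
  have h0 := (q j).2.1
  have h1 := (q j).2.2
  unfold faceDist
  split_ifs
  · exact h0
  · exact le_min h0 (by linarith)

lemma distJ_le_one {k : ℕ} (q : Fin (k + 1) → I) : distJ q ≤ 1 := by
  refine (Finset.inf'_le _ (Finset.mem_univ (Fin.last k))).trans ?_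
  simp only [faceDist, if_true]
  exact (q _).2.2

lemma distJ_of_InJ {k : ℕ} {q : Fin (k + 1) → I} (hq : InJ q) : distJ q ≤ 0 := by
  rcases hq with h | ⟨i, h⟩
  · refine (Finset.inf'_le _ (Finset.mem_univ (Fin.last k))).trans ?_
    simp [faceDist, h]
  · refine (Finset.inf'_le _ (Finset.mem_univ i.castSucc)).trans ?_
    have : i.castSucc ≠ Fin.last k := Fin.castSucc_ne_last i
    rcases h with h | h <;> simp [faceDist, h, this]

lemma flowJ_self {k : ℕ} (q : Fin (k + 1) → I) :
    flowJ (Set.projIcc 0 1 zero_le_one (distJ q), q) = q := by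
  funext j
  have h : Set.projIcc (0 : ℝ) 1 zero_le_one (distJ q) = ⟨distJ q, distJ_nonneg q, distJ_le_one q⟩ :=
    Set.projIcc_of_mem _ _
  have h2 : Set.projIcc (0 : ℝ) 1 zero_le_one (q j : ℝ) = q j := Set.projIcc_val _ _
  simp [flowJ, h, h2]

lemma flowJ_zero {k : ℕ} (q : Fin (k + 1) → I) : InJ (flowJ (0, q)) := by
  obtain ⟨j, -, hj⟩ := Finset.exists_mem_eq_inf' (Finset.univ_nonempty) (faceDist q)
  change distJ q = _ at hj
  have h0 := distJ_nonneg q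
  by_cases hd : 1 / 4 ≤ distJ q
  · left
    have := (q (Fin.last k)).2.2
    refine Set.projIcc_of_le_left _ ?_
    simp
    linarith
  induction j using Fin.lastCases with
  | last =>
    left
    simp only [faceDist, if_true] at hj
    refine Set.projIcc_of_le_left _ ?_
    simp
    linarith
  | cast i =>
    right
    have hne : i.castSucc ≠ Fin.last k := Fin.castSucc_ne_last i
    refine ⟨i, ?_⟩
    simp only [faceDist, hne, if_false] at hj
    rcases min_choice (q i.castSucc : ℝ) (1 - q i.castSucc) with h | h
    · left
      rw [h] at hj
      refine Set.projIcc_of_le_left _ ?_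
      simp only [hne, if_false, ← hj, Set.Icc.coe_zero]
      nlinarith
    · right
      rw [h] at hj
      have hq : (q i.castSucc : ℝ) = 1 - distJ q := by linarith
      refine Set.projIcc_of_right_le _ ?_
      simp only [hne, if_false, hq, Set.Icc.coe_zero]
      nlinarith

/-- Relative lifting for a Serre fibration, with constant data on `J`. -/
lemma rel_lift {k : ℕ} {E B : Type} [TopologicalSpace E] [TopologicalSpace B]
    {p : C(E, B)} (hp : IsSerreFibration p) (y : E) (h : C((Fin (k + 1) → I), B))
    (hJ : ∀ q, InJ q → h q = p y) :
    ∃ G : C((Fin (k + 1) → I), E), (∀ q, InJ q → G q = y) ∧ ∀ q, p (G q) = h q := by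
  obtain ⟨G, hG0, hG⟩ := hp (k + 1) (ContinuousMap.const _ y)
    (h.comp ⟨flowJ, continuous_flowJ⟩) (fun q => by
      simpa using hJ _ (flowJ_zero q))
  refine ⟨G.comp ⟨fun q => (Set.projIcc 0 1 zero_le_one (distJ q), q),
    (continuous_projIcc.comp continuous_distJ).prodMk continuous_id⟩, fun q hq => ?_, fun q => ?_⟩
  · have : Set.projIcc (0 : ℝ) 1 zero_le_one (distJ q) = 0 :=
      Set.projIcc_of_le_left _ (distJ_of_InJ hq)
    simp [this, hG0]
  · simp [hG, flowJ_self]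

/-- Gluing of `β` (negative times) and `γ` (positive times). -/
def glueD {k : ℕ} {X : Type} (β γ : (Fin (k + 1) → I) → X)
    (z : (Fin (k + 1) → I) × ℝ) : X :=
  if z.2 ≤ 0 then β (Function.update z.1 (Fin.last k) (Set.projIcc 0 1 zero_le_one (-z.2)))
  else γ (Function.update z.1 (Fin.last k) (Set.projIcc 0 1 zero_le_one z.2))

lemma mem_boundary_of_InJ {k : ℕ} {q : Fin (k + 1) → I} (hq : InJ q) :
    q ∈ Cube.boundary (Fin (k + 1)) := by
  rcases hq with h | ⟨i, h⟩
  · exact ⟨_, Or.inl h⟩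
  · exact ⟨_, h⟩

lemma InJ_update {k : ℕ} {q : Fin (k + 1) → I} (t : I)
    (h : ∃ i : Fin k, q i.castSucc = 0 ∨ q i.castSucc = 1) :
    InJ (Function.update q (Fin.last k) t) := by
  obtain ⟨i, h⟩ := h
  have hne : i.castSucc ≠ Fin.last k := Fin.castSucc_ne_last i
  exact Or.inr ⟨i, by simpa [Function.update_of_ne hne] using h⟩

lemma continuous_glueD {k : ℕ} {X : Type} [TopologicalSpace X] {x : X}
    (β : C((Fin (k + 1) → I), X)) (γ : GenLoop (Fin (k + 1)) X x)
    (hβ : ∀ q, InJ q → β q = x) : Continuous (glueD β γ) := by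
  unfold glueD
  refine Continuous.if_le ?_ ?_ continuous_snd continuous_const ?_
  · exact β.continuous.comp (continuous_fst.update _ (continuous_projIcc.comp continuous_snd.neg))
  · exact γ.1.continuous.comp (continuous_fst.update _ (continuous_projIcc.comp continuous_snd))
  · intro z hz
    have h0 : InJ (Function.update z.1 (Fin.last k) (Set.projIcc (0 : ℝ) 1 zero_le_one 0)) :=
      Or.inl (by rw [Function.update_self]; exact Set.projIcc_left _)
    rw [hz, neg_zero, hβ _ h0]
    exact (γ.2 _ (mem_boundary_of_InJ h0)).symm

lemma glueD_zero {k : ℕ} {X : Type} [TopologicalSpace X] {x : X}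
    (β : C((Fin (k + 1) → I), X)) (γ : GenLoop (Fin (k + 1)) X x)
    (hβ : ∀ q, InJ q → β q = x) (q : Fin (k + 1) → I) : glueD β γ (q, 0) = x := by
  simp only [glueD, le_refl, if_true, neg_zero]
  exact hβ _ (Or.inl (by rw [Function.update_self]; exact Set.projIcc_left _))

lemma glueD_one {k : ℕ} {X : Type} [TopologicalSpace X] {x : X}
    (β : C((Fin (k + 1) → I), X)) (γ : GenLoop (Fin (k + 1)) X x)
    (q : Fin (k + 1) → I) : glueD β γ (q, 1) = x := by
  simp only [glueD, not_le.2 one_pos, if_false]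
  exact γ.2 _ ⟨Fin.last k, Or.inr (by rw [Function.update_self]; exact Set.projIcc_right _)⟩

lemma glueD_side {k : ℕ} {X : Type} [TopologicalSpace X] {x : X}
    (β : C((Fin (k + 1) → I), X)) (γ : GenLoop (Fin (k + 1)) X x)
    (hβ : ∀ q, InJ q → β q = x) (q : Fin (k + 1) → I)
    (h : ∃ i : Fin k, q i.castSucc = 0 ∨ q i.castSucc = 1) (s : ℝ) :
    glueD β γ (q, s) = x := by
  unfold glueD
  split_ifs
  · exact hβ _ (InJ_update _ h)
  · exact γ.2 _ (mem_boundary_of_InJ (InJ_update _ h))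

/-- `t ≥ 0` evaluates to `γ`. -/
lemma glueD_self {k : ℕ} {X : Type} [TopologicalSpace X] {x : X}
    (β : C((Fin (k + 1) → I), X)) (γ : GenLoop (Fin (k + 1)) X x)
    (hβ : ∀ q, InJ q → β q = x) (q : Fin (k + 1) → I) :
    glueD β γ (q, (q (Fin.last k) : ℝ)) = γ q := by
  by_cases h : (q (Fin.last k) : ℝ) ≤ 0
  · have h0 : q (Fin.last k) = 0 := Subtype.ext (le_antisymm h (q _).2.1)
    have : ((q (Fin.last k) : I) : ℝ) = 0 := by rw [h0]; rfl
    rw [this, glueD_zero β γ hβ]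
    exact (γ.2 _ ⟨_, Or.inl h0⟩).symm
  · simp only [glueD, h, if_false]
    rw [show Set.projIcc (0 : ℝ) 1 zero_le_one (q (Fin.last k) : ℝ) = q (Fin.last k) from
      Set.projIcc_val _ _, Function.update_eq_self]

/-- One step of the construction. -/
lemma step_exists {k : ℕ} {X Y : Type} [TopologicalSpace X] [TopologicalSpace Y]
    {p : C(Y, X)} (hp : IsSerreFibration p) {x : X} {y : Y} (hxy : p y = x)
    (γ : GenLoop (Fin (k + 1)) X x)
    (β : {b : C((Fin (k + 1) → I), X) // ∀ q, InJ q → b q = x}) :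
    ∃ β' : {b : C((Fin (k + 1) → I), Y) // ∀ q, InJ q → b q = y},
      ∀ q, p (β'.1 q) = glueD β.1 γ (q, 1 - 2 * (q (Fin.last k) : ℝ)) := by
  have hc : Continuous fun q : Fin (k + 1) → I =>
      glueD β.1 γ (q, 1 - 2 * (q (Fin.last k) : ℝ)) :=
    (continuous_glueD β.1 γ β.2).comp (by fun_prop)
  obtain ⟨G, h1, h2⟩ := rel_lift hp y ⟨_, hc⟩ (fun q hq => by
    rw [hxy]
    change glueD β.1 γ (q, 1 - 2 * (q (Fin.last k) : ℝ)) = x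
    rcases hq with h | h
    · rw [h]
      simpa using glueD_one β.1 γ q
    · exact glueD_side β.1 γ β.2 q h _)
  exact ⟨⟨G, h1⟩, h2⟩

/-- The glued loop `c`. -/
def glueLoop {k : ℕ} {X : Type} [TopologicalSpace X] {x : X}
    (β : C((Fin (k + 1) → I), X)) (γ : GenLoop (Fin (k + 1)) X x)
    (hβ : ∀ q, InJ q → β q = x) : GenLoop (Fin (k + 1)) X x :=
  ⟨⟨fun q => glueD β γ (q, max (-(2 * (q (Fin.last k) : ℝ))) (4 * (q (Fin.last k) : ℝ) - 3)),
    (continuous_glueD β γ hβ).comp (by fun_prop)⟩, fun q hq => by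
      change glueD β γ (q, _) = x
      obtain ⟨j, hj⟩ := hq
      induction j using Fin.lastCases with
      | last =>
        rcases hj with h | h
        · rw [h]
          simpa using glueD_zero β γ hβ q
        · rw [h]
          norm_num
          exact glueD_one β γ q
      | cast i => exact glueD_side β γ hβ q ⟨i, hj⟩ _⟩

lemma glueLoop_homotopic {k : ℕ} {X : Type} [TopologicalSpace X] {x : X}
    (β : C((Fin (k + 1) → I), X)) (γ : GenLoop (Fin (k + 1)) X x)
    (hβ : ∀ q, InJ q → β q = x) : GenLoop.Homotopic γ (glueLoop β γ hβ) := by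
  let φ : (Fin (k + 1) → I) → ℝ := fun q =>
    max (-(2 * (q (Fin.last k) : ℝ))) (4 * (q (Fin.last k) : ℝ) - 3)
  let F : I × (Fin (k + 1) → I) → X := fun z =>
    glueD β γ (z.2, (1 - (z.1 : ℝ)) * (z.2 (Fin.last k) : ℝ) + z.1 * φ z.2)
  have hF : Continuous F := (continuous_glueD β γ hβ).comp (by fun_prop)
  refine ⟨⟨⟨⟨F, hF⟩, fun q => ?_, fun q => ?_⟩, fun t q hq => ?_⟩⟩
  · change F (0, q) = γ q
    simpa [F] using glueD_self β γ hβ q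
  · change F (1, q) = glueD β γ (q, φ q)
    simp [F]
  · have hγ : γ.1 q = x := γ.2 q hq
    change F (t, q) = γ.1 q
    rw [hγ]
    obtain ⟨j, hj⟩ := hq
    induction j using Fin.lastCases with
    | last =>
      rcases hj with h | h
      · simp only [F, φ, h]
        simpa using glueD_zero β γ hβ q
      · simp only [F, φ, h]
        norm_num
        exact glueD_one β γ q
    | cast i => exact glueD_side β γ hβ q ⟨i, hj⟩ _

lemma piTowerMap_one {X : ℕ → Type} [∀ n, TopologicalSpace (X n)] {p : ∀ n, C(X (n + 1), X n)}
    (k : ℕ) {x : ∀ n, X n} (hx : ∀ n, p n (x (n + 1)) = x n) (n : ℕ) :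
    piTowerMap (k + 1) hx n 1 = 1 := by
  rw [HomotopyGroup.one_def, HomotopyGroup.one_def]
  refine congrArg (Quotient.mk _) ?_
  refine Subtype.ext (ContinuousMap.ext fun q => ?_)
  exact hx n

lemma InJ_snoc {k : ℕ} {q : Fin k → I} (t : I) (hq : q ∈ Cube.boundary (Fin k)) :
    InJ (Fin.snoc q t : Fin (k + 1) → I) := by
  obtain ⟨i, h⟩ := hq
  exact Or.inr ⟨i, by simpa using h⟩

lemma snoc_castSucc_last {k : ℕ} (q : Fin (k + 1) → I) (t : I) (h : q (Fin.last k) = t) :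
    (Fin.snoc (fun i : Fin k => q i.castSucc) t : Fin (k + 1) → I) = q := by
  subst h
  exact Fin.snoc_init_self q

/-- **Proposition 4.6 (`φ̃` is surjective).**  Let `(X n, p n)` be a tower of fibrations of
pointed topological spaces, with basepoints the components `x n` of a chosen point of the
inverse limit, and let `k ≥ 0`.  Then `φ̃ : Ker P → lim¹_n π_{k+1} X_n` is surjective: for
every family of maps `γ_n : I^{k+1} → X_n` sending `∂I^{k+1}` to the basepoint there is a
map `α : I^k → lim_n X_n` sending `∂I^k` to the basepoint, whose class lies in the kernel
of `P : π_k (lim_n X_n) → lim_n π_k X_n`, together with a family of nullhomotopies `β_n` of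
the projections `α_n = P_n ∘ α`, such that the glued family
`([β_n * (p_{n+1} ∘ β_{n+1}⁻¹)])_n` lies in the same `lim¹`-orbit as `([γ_n])_n`; that is,
`φ̃([α])` is the element of `lim¹_n π_{k+1} X_n` represented by `([γ_n])_n`. -/
theorem phiTilde_surjective
    (X : ℕ → Type) [∀ n, TopologicalSpace (X n)] (p : ∀ n, C(X (n + 1), X n))
    (hfib : ∀ n, IsSerreFibration (p n))
    (x : ∀ n, X n) (hx : ∀ n, p n (x (n + 1)) = x n)
    (k : ℕ)
    (γ : ∀ n, GenLoop (Fin (k + 1)) (X n) (x n)) :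
    ∃ α : GenLoop (Fin k) (TowerLim X p) (⟨x, hx⟩ : TowerLim X p),
      (∀ n, piProjMap k hx n (piCls α) = piConst (Fin k) (x n)) ∧
      ∃ β : ∀ n, C((Fin (k + 1) → I), X n),
        (∀ n, IsNullhomotopy (genLoopMap (Fin k) (TowerLim.proj n) rfl α) (β n)) ∧
        ∃ c : ∀ n, GenLoop (Fin (k + 1)) (X n) (x n),
          (∀ n, IsGluedWithReverse (β n) (p n) (β (n + 1)) (c n)) ∧
          ∃ g : ∀ n, HomotopyGroup (Fin (k + 1)) (X n) (x n),
            ∀ n, piCls (γ n)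
              = (piTowerMap (k + 1) hx n (g (n + 1)))⁻¹ * piCls (c n) * g n := by
  choose f hf using fun n => step_exists (k := k) (hfib n) (hx n) (γ n)
  let B : ∀ n, {b : C((Fin (k + 1) → I), X n) // ∀ q, InJ q → b q = x n} := fun n =>
    Nat.rec ⟨ContinuousMap.const _ (x 0), fun _ _ => rfl⟩ (fun n b => f n b) n
  have hB : ∀ n q, p n ((B (n + 1)).1 q) =
      glueD (B n).1 (γ n) (q, 1 - 2 * (q (Fin.last k) : ℝ)) := fun n => hf n (B n)
  have hsnoc : Continuous fun q : Fin k → I => (Fin.snoc q 1 : Fin (k + 1) → I) :=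
    Continuous.finSnoc continuous_id continuous_const
  have hB1 : ∀ n (q : Fin k → I),
      p n ((B (n + 1)).1 (Fin.snoc q 1)) = (B n).1 (Fin.snoc q 1) := by
    intro n q
    rw [hB]
    have h1 : (1 - 2 * (((Fin.snoc q 1 : Fin (k + 1) → I) (Fin.last k) : I) : ℝ)) = -1 := by
      simp
      norm_num
    rw [h1]
    have h2 : Set.projIcc (0 : ℝ) 1 zero_le_one 1 = 1 := Set.projIcc_right _
    have h3 : (-1 : ℝ) ≤ 0 := by norm_num
    simp only [glueD, h3, if_true, neg_neg, h2, Fin.update_snoc_last]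
  let α : GenLoop (Fin k) (TowerLim X p) (⟨x, hx⟩ : TowerLim X p) :=
    ⟨⟨fun q => ⟨fun n => (B n).1 (Fin.snoc q 1), fun n => hB1 n q⟩,
      Continuous.subtype_mk (continuous_pi fun n => (B n).1.continuous.comp hsnoc) _⟩,
      fun q hq => Subtype.ext (funext fun n => (B n).2 _ (InJ_snoc 1 hq))⟩
  have hα : ∀ n q, genLoopMap (Fin k) (TowerLim.proj n) rfl α q = (B n).1 (Fin.snoc q 1) :=
    fun n q => rfl
  refine ⟨α, fun n => ?_, fun n => (B n).1, fun n => ⟨?_, ?_, ?_⟩,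
    fun n => glueLoop (B n).1 (γ n) (B n).2, fun n q => ?_, fun n => 1, fun n => ?_⟩
  · refine Quotient.sound (GenLoop.Homotopic.symm ?_)
    have hc : Continuous fun z : I × (Fin k → I) =>
        (B n).1 (Fin.snoc z.2 z.1 : Fin (k + 1) → I) :=
      (B n).1.continuous.comp (Continuous.finSnoc continuous_snd continuous_fst)
    refine ⟨⟨⟨⟨_, hc⟩, fun q => ?_, fun q => rfl⟩, fun t q hq => ?_⟩⟩
    · exact (B n).2 _ (Or.inl (by simp))
    · exact (B n).2 _ (InJ_snoc t hq)
  · exact fun q h => (B n).2 q (Or.inl h)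
  · intro q h
    rw [hα, snoc_castSucc_last q 1 h]
  · exact fun q h => (B n).2 q (Or.inr h)
  · change glueD (B n).1 (γ n) (q, max (-(2 * (q (Fin.last k) : ℝ)))
      (4 * (q (Fin.last k) : ℝ) - 3)) = _
    have h0 := (q (Fin.last k)).2.1
    have h1 := (q (Fin.last k)).2.2
    split_ifs with h
    · rw [max_eq_left (by linarith)]
      have h2 : -(2 * (q (Fin.last k) : ℝ)) ≤ 0 := by linarith
      simp only [glueD, h2, if_true, neg_neg]
    · rw [max_eq_right (by linarith), hB]
      have h2 : Set.projIcc (0 : ℝ) 1 zero_le_one (2 - 2 * (q (Fin.last k) : ℝ)) =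
          ⟨2 - 2 * (q (Fin.last k) : ℝ), by linarith, by linarith⟩ :=
        Set.projIcc_of_mem _ _
      rw [Function.update_self, h2]
      have h3 : 1 - 2 * (2 - 2 * (q (Fin.last k) : ℝ)) = 4 * (q (Fin.last k) : ℝ) - 3 := by ring
      simp only [h3, glueD, Function.update_idem]
  · rw [piTowerMap_one, inv_one, one_mul, mul_one]
    exact Quotient.sound (glueLoop_homotopic (B n).1 (γ n) (B n).2)

end
end
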